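/- At ψ = 0 the score of the full parameter-driven likelihood with respect to a lag-a dependence parameter equals τ times the lag-a sum of cross-products of posterior-mean residuals. Precisely: fix n ≥ 1, an integer 1 ≤ a < n, integers m_t ≥ 1 and 0 ≤ y_t ≤ m_t, x_t ∈ ℝ, β-linear predictors w_t = x_t (scalars for simplicity absorbed into w_t), and τ ≥ 0. Let ψ ↦ R(ψ) be a map from an open interval around 0 into the symmetric positive-definite n × n matrices, differentiable at 0, with R(0) = I_n and with [R'(0)]_{s,t} = 1 if |s − t| = a and 0 otherwise. Define L(ψ) = ∫_{ℝⁿ} exp( Σ_{t=1}^n [ y_t (w_t + √τ α_t) − m_t b(w_t + √τ α_t) ] ) g(α, R(ψ)) dα, where g(·, R) is the density of N(0, R). Then ψ ↦ log L(ψ) is differentiable at 0 and its derivative equals τ Σ_{t=a+1}^n u_t u_{t−a}, where u_t = y_t − ( ∫_ℝ m_t ḃ(w_t + √τ α) f(y_t | w_t + √τ α) φ(α) dα ) / ( ∫_ℝ f(y_t | w_t + √τ α) φ(α) dα ) and f(y | w) = exp(y·w − m·b(w) + log C(m, y)). -/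

import Mathlib

/-!
The curve `R` enters `L` only through `det R` and `R⁻¹`. At `R = 1` the derivative of the
determinant is `tr R'(0) = 0`, because `a ≥ 1` (`hasDerivAt_det_zero`), and the derivative of the
inverse is `-R'(0)` (`hasDerivAt_inv_entry`). Differentiating under the integral sign
(`hasDerivAt_gauss_integral`) therefore gives
`L'(0) = c ∫ h(α) exp (-|α|²/2) (1/2) αᵀ R'(0) α dα`, where `h` is the conditional likelihood, which
is bounded by `1`, and `c = (2π)^(-n/2)`. Since `R` is assumed differentiable at `0` only, the
domination is by an estimate of `|F ψ - F 0|` linear in `|ψ|`, not by a bound on derivatives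
nearby.

At `ψ = 0` the weight `h(α) exp (-|α|²/2)` is a product over coordinates, so the cross moment of
`α_s` and `α_t`, `s ≠ t`, is the product of the two one-dimensional posterior means
(`integral_pair_mul_prod`). Each of these is `√τ u_t` by Stein's identity, that is, integration
by parts against the Gaussian weight (`integral_id_mul_gaussKern`). Dividing `L'(0)` by `L(0)` and
pairing `(s, t)` with `(t, s)` gives the claim.
-/

open MeasureTheory Real Finset Matrix

noncomputable section

/-- `b(w) = log(1 + e^w)`. -/
def bfun (w : ℝ) : ℝ := Real.log (1 + Real.exp w)

/-- `ḃ(w) = e^w / (1 + e^w)`. -/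
def bdot (w : ℝ) : ℝ := Real.exp w / (1 + Real.exp w)

/-- The standard normal density `φ(α) = (2π)^{-1/2} exp(-α²/2)`. -/
def stdNormalPDF (a : ℝ) : ℝ := (Real.sqrt (2 * Real.pi))⁻¹ * Real.exp (-(a ^ 2) / 2)

/-- The binomial density at state `w`: `f(y | w) = exp(y·w − m·b(w) + log C(m, y))`. -/
def binDens (m y : ℕ) (w : ℝ) : ℝ :=
  Real.exp ((y : ℝ) * w - (m : ℝ) * bfun w + Real.log (Nat.choose m y))

/-- The density of the centered multivariate normal `N(0, R)` on `ℝⁿ`: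
`g(α, R) = (2π)^{−n/2} det(R)^{−1/2} exp(−(1/2) αᵀ R⁻¹ α)`. -/
def mvnDens {n : ℕ} (R : Matrix (Fin n) (Fin n) ℝ) (α : Fin n → ℝ) : ℝ :=
  (2 * Real.pi) ^ (-(n : ℝ) / 2) * R.det ^ (-(1 : ℝ) / 2)
    * Real.exp (-(1 / 2) * (α ⬝ᵥ (R⁻¹ *ᵥ α)))

/-! ### One latent variable: Gaussian kernel and Stein's identity -/

/-- The unnormalised binomial likelihood factor `exp (y v - m b(v))` at `v = w + σ x`, times the
unnormalised standard Gaussian weight `exp (-x² / 2)`. -/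
def gaussKern (m y : ℕ) (w σ x : ℝ) : ℝ :=
  Real.exp ((y : ℝ) * (w + σ * x) - (m : ℝ) * bfun (w + σ * x)) * Real.exp (-(x ^ 2) / 2)

lemma hasDerivAt_bfun (w : ℝ) : HasDerivAt bfun (bdot w) w := by
  have h : HasDerivAt (fun w => 1 + Real.exp w) (Real.exp w) w := by
    simpa using (Real.hasDerivAt_exp w).const_add 1
  exact h.log (by positivity)

lemma continuous_bfun : Continuous bfun :=
  continuous_iff_continuousAt.2 fun w => (hasDerivAt_bfun w).continuousAt

lemma continuous_bdot : Continuous bdot :=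
  Real.continuous_exp.div (by fun_prop) fun w => by positivity

lemma bdot_nonneg (w : ℝ) : 0 ≤ bdot w := by unfold bdot; positivity

lemma bdot_le_one (w : ℝ) : bdot w ≤ 1 := by
  unfold bdot
  rw [div_le_one (by positivity)]
  linarith

/-- Since `b(v) ≥ max(v, 0)` and `0 ≤ y ≤ m`, the log-likelihood is nonpositive. -/
lemma loglik_nonpos {m y : ℕ} (hy : y ≤ m) (v : ℝ) : (y : ℝ) * v - (m : ℝ) * bfun v ≤ 0 := by
  have h1 : v ≤ bfun v := by
    unfold bfun
    rw [Real.le_log_iff_exp_le (by positivity)]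
    linarith
  have h0 : 0 ≤ bfun v := Real.log_nonneg (by linarith [Real.exp_pos v])
  have hy' : (y : ℝ) ≤ m := by exact_mod_cast hy
  have := mul_le_mul_of_nonneg_left h1 (Nat.cast_nonneg (α := ℝ) y)
  have := mul_le_mul_of_nonneg_right hy' h0
  linarith

lemma gaussKern_pos (m y : ℕ) (w σ x : ℝ) : 0 < gaussKern m y w σ x := by
  unfold gaussKern; positivity

lemma gaussKern_le {m y : ℕ} (hy : y ≤ m) (w σ x : ℝ) :
    gaussKern m y w σ x ≤ Real.exp (-(1 / 2) * x ^ 2) := by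
  unfold gaussKern
  have h1 := Real.exp_le_one_iff.2 (loglik_nonpos hy (w + σ * x))
  have h2 : -(x ^ 2) / 2 = -(1 / 2) * x ^ 2 := by ring
  rw [h2]
  exact mul_le_of_le_one_left (Real.exp_pos _).le h1

lemma continuous_gaussKern (m y : ℕ) (w σ : ℝ) : Continuous (gaussKern m y w σ) := by
  unfold gaussKern
  have := continuous_bfun
  fun_prop

lemma integrable_gaussKern {m y : ℕ} (hy : y ≤ m) (w σ : ℝ) :
    Integrable (gaussKern m y w σ) := by
  refine (integrable_exp_neg_mul_sq (b := 1 / 2) (by norm_num)).mono'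
    (continuous_gaussKern m y w σ).aestronglyMeasurable (ae_of_all _ fun x => ?_)
  rw [Real.norm_of_nonneg (gaussKern_pos m y w σ x).le]
  exact gaussKern_le hy w σ x

lemma integrable_id_mul_gaussKern {m y : ℕ} (hy : y ≤ m) (w σ : ℝ) :
    Integrable (fun x => x * gaussKern m y w σ x) := by
  refine (integrable_mul_exp_neg_mul_sq (b := 1 / 2) (by norm_num)).mono
    (continuous_id.mul (continuous_gaussKern m y w σ)).aestronglyMeasurable
    (ae_of_all _ fun x => ?_)
  rw [norm_mul, norm_mul, Real.norm_of_nonneg (gaussKern_pos m y w σ x).le,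
    Real.norm_of_nonneg (Real.exp_pos _).le]
  exact mul_le_mul_of_nonneg_left (gaussKern_le hy w σ x) (norm_nonneg _)

lemma integrable_bdot_mul_gaussKern {m y : ℕ} (hy : y ≤ m) (w σ : ℝ) :
    Integrable (fun x => bdot (w + σ * x) * gaussKern m y w σ x) := by
  refine (integrable_gaussKern hy w σ).mono
    ((continuous_bdot.comp (by fun_prop)).mul
      (continuous_gaussKern m y w σ)).aestronglyMeasurable (ae_of_all _ fun x => ?_)
  rw [norm_mul, Real.norm_of_nonneg (bdot_nonneg _)]
  exact mul_le_of_le_one_left (norm_nonneg _) (bdot_le_one _)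

lemma integral_gaussKern_pos {m y : ℕ} (hy : y ≤ m) (w σ : ℝ) :
    0 < ∫ x, gaussKern m y w σ x := by
  refine (integral_pos_iff_support_of_nonneg (fun x => (gaussKern_pos m y w σ x).le)
    (integrable_gaussKern hy w σ)).2 ?_
  have : Function.support (gaussKern m y w σ) = Set.univ :=
    Set.eq_univ_of_forall fun x => (gaussKern_pos m y w σ x).ne'
  simp [this]

/-- Stein's identity for the posterior of one latent variable: integrating the derivative of
`gaussKern`, which is `(σ (y - m ḃ) - x) * gaussKern`, over the line gives zero. -/
lemma integral_id_mul_gaussKern {m y : ℕ} (hy : y ≤ m) (w σ : ℝ) :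
    ∫ x, x * gaussKern m y w σ x =
      σ * (y * (∫ x, gaussKern m y w σ x)
        - m * ∫ x, bdot (w + σ * x) * gaussKern m y w σ x) := by
  have hd : ∀ x, HasDerivAt (gaussKern m y w σ)
      (σ * (y * gaussKern m y w σ x - m * (bdot (w + σ * x) * gaussKern m y w σ x))
        - x * gaussKern m y w σ x) x := by
    intro x
    have hv : HasDerivAt (fun x => w + σ * x) σ x := by
      simpa using ((hasDerivAt_id x).const_mul σ).const_add w
    have hb := (hasDerivAt_bfun (w + σ * x)).comp x hv
    have hq : HasDerivAt (fun x : ℝ => -(x ^ 2) / 2) (-x) x := by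
      have := ((hasDerivAt_pow 2 x).neg).div_const 2
      refine this.congr_deriv ?_
      simp only [Nat.cast_ofNat, Nat.add_one_sub_one, pow_one]
      ring
    have := (((hv.const_mul (y : ℝ)).sub (hb.const_mul (m : ℝ))).exp).mul hq.exp
    refine this.congr_deriv ?_
    simp only [gaussKern, Function.comp_apply, Pi.sub_apply]
    ring
  have h1 := (integrable_gaussKern hy w σ).const_mul (y : ℝ)
  have h2 := (integrable_bdot_mul_gaussKern hy w σ).const_mul (m : ℝ)
  have h3 := (h1.sub h2).const_mul σ
  have h4 := integrable_id_mul_gaussKern hy w σ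
  have h0 := integral_eq_zero_of_hasDerivAt_of_integrable hd (h3.sub h4)
    (integrable_gaussKern hy w σ)
  rw [integral_sub (by exact h3) h4, integral_const_mul, integral_sub h1 h2, integral_const_mul,
    integral_const_mul] at h0
  linarith

lemma binDens_mul_stdNormalPDF {m y : ℕ} (hy : y ≤ m) (w σ x : ℝ) :
    binDens m y (w + σ * x) * stdNormalPDF x =
      ((Nat.choose m y : ℝ) * (Real.sqrt (2 * Real.pi))⁻¹) * gaussKern m y w σ x := by
  have hc : (0 : ℝ) < Nat.choose m y := by exact_mod_cast Nat.choose_pos hy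
  unfold binDens stdNormalPDF gaussKern
  rw [Real.exp_add, Real.exp_log hc]
  ring

/-- The posterior mean of one latent variable is `σ` times the posterior-mean residual. -/
lemma integral_id_mul_gaussKern_eq_residual {m y : ℕ} (hy : y ≤ m) (w σ u : ℝ)
    (hu : u = (y : ℝ) -
      (∫ x : ℝ, (m : ℝ) * bdot (w + σ * x) * binDens m y (w + σ * x) * stdNormalPDF x) /
      (∫ x : ℝ, binDens m y (w + σ * x) * stdNormalPDF x)) :
    ∫ x, x * gaussKern m y w σ x = σ * u * ∫ x, gaussKern m y w σ x := by
  have hc : (0 : ℝ) < (Nat.choose m y : ℝ) * (Real.sqrt (2 * Real.pi))⁻¹ := by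
    have : (0 : ℝ) < Nat.choose m y := by exact_mod_cast Nat.choose_pos hy
    positivity
  have e1 : (∫ x : ℝ, (m : ℝ) * bdot (w + σ * x) * binDens m y (w + σ * x) * stdNormalPDF x)
      = ((Nat.choose m y : ℝ) * (Real.sqrt (2 * Real.pi))⁻¹) *
        (m * ∫ x, bdot (w + σ * x) * gaussKern m y w σ x) := by
    rw [← integral_const_mul, ← integral_const_mul]
    refine integral_congr_ae (ae_of_all _ fun x => ?_)
    simp only
    rw [mul_assoc, binDens_mul_stdNormalPDF hy]
    ring
  have hZ := integral_gaussKern_pos hy w σ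
  simp_rw [e1, binDens_mul_stdNormalPDF hy, integral_const_mul] at hu
  rw [mul_div_mul_left _ _ hc.ne'] at hu
  rw [integral_id_mul_gaussKern hy, hu]
  field_simp

/-! ### Determinant and inverse near the identity -/

/-- At the identity the derivative of the determinant is the trace; here it vanishes. -/
lemma hasDerivAt_det_zero {n : ℕ} (R : ℝ → Matrix (Fin n) (Fin n) ℝ)
    (D : Matrix (Fin n) (Fin n) ℝ) (hR0 : R 0 = 1)
    (hR : ∀ s t, HasDerivAt (fun ψ => R ψ s t) (D s t) 0) (hD : ∀ s, D s s = 0) :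
    HasDerivAt (fun ψ => (R ψ).det) 0 0 := by
  simp_rw [Matrix.det_apply]
  have key : ∀ σ : Equiv.Perm (Fin n),
      HasDerivAt (fun ψ => ∏ i, R ψ (σ i) i) 0 0 := by
    intro σ
    have h := HasDerivAt.fun_finsetProd (u := Finset.univ) (x := (0 : ℝ))
      (f := fun i ψ => R ψ (σ i) i) (fun i _ => hR (σ i) i)
    refine h.congr_deriv (Finset.sum_eq_zero fun i _ => ?_)
    by_cases hσ : σ = 1
    · simp [hσ, hD]
    · -- a nontrivial permutation moves at least two points, one of which differs from `i`
      obtain ⟨j, hj⟩ : ∃ j, σ j ≠ j := by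
        by_contra! hcon
        exact hσ (Equiv.ext hcon)
      obtain ⟨k, hk, hki⟩ : ∃ k, σ k ≠ k ∧ k ≠ i := by
        by_cases hji : j = i
        · exact ⟨σ j, fun h => hj (σ.injective h), fun h => hj (h.trans hji.symm)⟩
        · exact ⟨j, hj, hji⟩
      rw [Finset.prod_eq_zero (i := k) (by simp [hki]) (by simp [hR0, hk]), zero_smul]
  have := HasDerivAt.fun_sum (u := Finset.univ) fun σ _ =>
    (key σ).const_smul (Equiv.Perm.sign σ)
  simpa using this

/-- The derivative of the inverse at the identity, entry by entry, for a curve differentiable only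
at the base point: `R⁻¹ - 1 = R⁻¹ (1 - R)` with `R⁻¹` continuous and `1 - R` vanishing there. -/
lemma hasDerivAt_inv_entry {n : ℕ} (R : ℝ → Matrix (Fin n) (Fin n) ℝ)
    (D : Matrix (Fin n) (Fin n) ℝ) (hR0 : R 0 = 1)
    (hR : ∀ s t, HasDerivAt (fun ψ => R ψ s t) (D s t) 0) (s t : Fin n) :
    HasDerivAt (fun ψ => (R ψ)⁻¹ s t) (-(D s t)) 0 := by
  have hRc : ContinuousAt R 0 :=
    continuousAt_pi.2 fun i => continuousAt_pi.2 fun j => (hR i j).continuousAt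
  have hdetc : ContinuousAt (fun ψ => (R ψ).det) 0 :=
    (continuous_id.matrix_det.continuousAt (x := R 0)).comp hRc
  have hinvc : ContinuousAt (fun ψ => (R ψ)⁻¹) 0 := by
    refine ContinuousAt.comp (g := Inv.inv) (continuousAt_matrix_inv (R 0) ?_) hRc
    rw [Ring.inverse_eq_inv']
    exact continuousAt_inv₀ (by simp [hR0])
  have hprod : ∀ k, HasDerivAt (fun ψ => (R ψ)⁻¹ s k * ((1 : Matrix (Fin n) (Fin n) ℝ) k t
      - R ψ k t)) ((1 : Matrix (Fin n) (Fin n) ℝ) s k * -(D k t)) 0 := by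
    intro k
    have hc : ContinuousAt (fun ψ => (R ψ)⁻¹ s k) 0 :=
      continuousAt_pi.1 (continuousAt_pi.1 hinvc s) k
    have hg := (hR k t).const_sub ((1 : Matrix (Fin n) (Fin n) ℝ) k t)
    rw [hasDerivAt_iff_tendsto_slope] at hg ⊢
    have hc' := hc.tendsto.mono_left (nhdsWithin_le_nhds (s := {0}ᶜ))
    have := hc'.mul hg
    rw [hR0, inv_one] at this
    refine this.congr fun ψ => ?_
    simp only [slope_def_field, hR0, sub_self, mul_zero, sub_zero]
    ring
  have hsum := (HasDerivAt.fun_sum (u := Finset.univ) fun k _ => hprod k).const_add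
    ((1 : Matrix (Fin n) (Fin n) ℝ) s t)
  have hval : ∑ k, (1 : Matrix (Fin n) (Fin n) ℝ) s k * -(D k t) = -(D s t) := by
    simp [Matrix.one_apply]
  rw [hval] at hsum
  refine hsum.congr_of_eventuallyEq ?_
  have hne : ∀ᶠ ψ in nhds 0, (R ψ).det ≠ 0 := hdetc.eventually_ne (by simp [hR0])
  filter_upwards [hne] with ψ hψ
  have h1 : (R ψ)⁻¹ = 1 + (R ψ)⁻¹ * (1 - R ψ) := by
    rw [mul_sub, mul_one, Matrix.nonsing_inv_mul _ (isUnit_iff_ne_zero.2 hψ)]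
    abel
  have h2 := congrFun (congrFun h1 s) t
  rw [h2, Matrix.add_apply, Matrix.mul_apply]
  rfl

/-! ### Differentiation under the Gaussian integral -/

lemma quad_eq_sum {n : ℕ} (P : Matrix (Fin n) (Fin n) ℝ) (α : Fin n → ℝ) :
    α ⬝ᵥ (P *ᵥ α) = ∑ s, ∑ t, P s t * (α s * α t) := by
  simp only [dotProduct, mulVec, Finset.mul_sum]
  exact Finset.sum_congr rfl fun s _ => Finset.sum_congr rfl fun t _ => by ring

lemma abs_exp_sub_exp_le {x y B : ℝ} (hx : x ≤ B) (hy : y ≤ B) :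
    |Real.exp x - Real.exp y| ≤ |x - y| * Real.exp B := by
  wlog h : y ≤ x generalizing x y
  · rw [abs_sub_comm, abs_sub_comm x y]
    exact this hy hx (le_of_not_ge h)
  rw [abs_of_nonneg (sub_nonneg.2 (Real.exp_le_exp.2 h)), abs_of_nonneg (sub_nonneg.2 h)]
  have h1 : Real.exp x - Real.exp y = Real.exp x * (1 - Real.exp (y - x)) := by
    rw [mul_sub, ← Real.exp_add]; simp
  have h2 : 1 - Real.exp (y - x) ≤ x - y := by linarith [Real.add_one_le_exp (y - x)]
  rw [h1, mul_comm]
  exact mul_le_mul h2 (Real.exp_le_exp.2 hx) (Real.exp_pos _).le (by linarith)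

lemma integrable_exp_neg_sum_sq (n : ℕ) {c : ℝ} (hc : 0 < c) :
    Integrable (fun α : Fin n → ℝ => Real.exp (-c * ∑ i, α i ^ 2)) := by
  have := Integrable.fintype_prod (μ := fun _ : Fin n => (volume : Measure ℝ))
    (f := fun _ : Fin n => fun x : ℝ => Real.exp (-c * x ^ 2))
    (fun _ => integrable_exp_neg_mul_sq hc)
  refine this.congr (ae_of_all _ fun α => ?_)
  simp only
  rw [← Real.exp_sum, Finset.mul_sum]

/-- Differentiation under the integral sign at an identity precision matrix. The curve `P` need be
differentiable only at `0`; this gives `|P ψ s t - δ s t| ≤ C |ψ|` near `0`, hence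
`|αᵀ (P ψ) α - |α|²| ≤ K |ψ| |α|²`, and the difference quotients are dominated by a multiple of
`|α|² exp (-|α|²/4)`. -/
lemma hasDerivAt_gauss_integral {n : ℕ} (h : (Fin n → ℝ) → ℝ) (hc : Continuous h)
    (hh : ∀ α, |h α| ≤ 1) (P : ℝ → Matrix (Fin n) (Fin n) ℝ) (D : Matrix (Fin n) (Fin n) ℝ)
    (hP0 : P 0 = 1) (hP : ∀ s t, HasDerivAt (fun ψ => P ψ s t) (-(D s t)) 0) :
    HasDerivAt (fun ψ => ∫ α, h α * Real.exp (-(1 / 2) * (α ⬝ᵥ (P ψ *ᵥ α))))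
      (∫ α, h α * (Real.exp (-(1 / 2) * ∑ i, α i ^ 2) *
        (1 / 2 * ∑ s, ∑ t, D s t * (α s * α t)))) 0 := by
  have hq0 : ∀ α : Fin n → ℝ, α ⬝ᵥ (P 0 *ᵥ α) = ∑ i, α i ^ 2 := by
    intro α
    rw [hP0, Matrix.one_mulVec]
    simp [dotProduct, sq]
  have hO : ∀ s t, ∃ C, 0 ≤ C ∧ ∀ᶠ ψ in nhds (0 : ℝ), |P ψ s t - P 0 s t| ≤ C * |ψ| := by
    intro s t
    obtain ⟨C, hC, hb⟩ := ((hP s t).isBigO_sub).exists_nonneg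
    refine ⟨C, hC, hb.bound.mono fun ψ hψ => ?_⟩
    simpa using hψ
  choose C hC0 hC using hO
  set K : ℝ := ∑ s, ∑ t, C s t with hK
  have hK0 : 0 ≤ K := Finset.sum_nonneg fun s _ => Finset.sum_nonneg fun t _ => hC0 s t
  have hsmall : ∀ᶠ ψ in nhds (0 : ℝ), K * |ψ| ≤ 1 / 2 := by
    have : ContinuousAt (fun ψ : ℝ => K * |ψ|) 0 := by fun_prop
    have h2 : (fun ψ : ℝ => K * |ψ|) 0 < 1 / 2 := by simp
    exact (this.eventually_lt_const h2).mono fun ψ hψ => hψ.le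
  have hall : ∀ᶠ ψ in nhds (0 : ℝ), ∀ s t, |P ψ s t - P 0 s t| ≤ C s t * |ψ| :=
    Filter.eventually_all.2 fun s => Filter.eventually_all.2 fun t => hC s t
  have hquad : ∀ (ψ : ℝ), (∀ s t, |P ψ s t - P 0 s t| ≤ C s t * |ψ|) → ∀ α : Fin n → ℝ,
      |α ⬝ᵥ (P ψ *ᵥ α) - ∑ i, α i ^ 2| ≤ K * |ψ| * ∑ i, α i ^ 2 := by
    intro ψ hψ α
    rw [← hq0 α, quad_eq_sum, quad_eq_sum, ← Finset.sum_sub_distrib]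
    simp_rw [← Finset.sum_sub_distrib, ← sub_mul]
    rw [← quad_eq_sum, hq0, hK, Finset.sum_mul, Finset.sum_mul]
    refine (Finset.abs_sum_le_sum_abs _ _).trans (Finset.sum_le_sum fun s _ => ?_)
    rw [Finset.sum_mul, Finset.sum_mul]
    refine (Finset.abs_sum_le_sum_abs _ _).trans (Finset.sum_le_sum fun t _ => ?_)
    rw [abs_mul]
    have hst : |α s * α t| ≤ ∑ i, α i ^ 2 := by
      have h1 := Finset.single_le_sum (f := fun i => α i ^ 2) (fun i _ => sq_nonneg _)
        (Finset.mem_univ s)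
      have h2 := Finset.single_le_sum (f := fun i => α i ^ 2) (fun i _ => sq_nonneg _)
        (Finset.mem_univ t)
      rw [abs_le]
      constructor <;> nlinarith [sq_nonneg (α s + α t), sq_nonneg (α s - α t)]
    exact mul_le_mul (hψ s t) hst (abs_nonneg _) (mul_nonneg (hC0 s t) (abs_nonneg _))
  have hmeas : ∀ ψ : ℝ, AEStronglyMeasurable
      (fun α => h α * Real.exp (-(1 / 2) * (α ⬝ᵥ (P ψ *ᵥ α)))) volume := by
    intro ψ
    simp_rw [quad_eq_sum]
    exact Continuous.aestronglyMeasurable (by fun_prop)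
  have hF' : Continuous fun α : Fin n → ℝ => h α * (Real.exp (-(1 / 2) * ∑ i, α i ^ 2) *
        (1 / 2 * ∑ s, ∑ t, D s t * (α s * α t))) := by fun_prop
  have main := hasFDerivAt_integral_of_dominated_loc_of_lip' (𝕜 := ℝ) (μ := volume)
    (F := fun ψ α => h α * Real.exp (-(1 / 2) * (α ⬝ᵥ (P ψ *ᵥ α))))
    (F' := fun α => ContinuousLinearMap.toSpanSingleton ℝ
      (h α * (Real.exp (-(1 / 2) * ∑ i, α i ^ 2) *
        (1 / 2 * ∑ s, ∑ t, D s t * (α s * α t)))))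
    (x₀ := (0 : ℝ)) (bound := fun α => 4 * K * Real.exp (-(1 / 8) * ∑ i, α i ^ 2))
    (Filter.inter_mem hsmall hall) (fun ψ _ => hmeas ψ) ?_ ?_ ?_ ?_ ?_
  · have h2 := main.2.hasDerivAt
    refine h2.congr_deriv ?_
    rw [ContinuousLinearMap.integral_apply main.1]
    simp
  · refine (integrable_exp_neg_sum_sq n (c := 1 / 2) (by norm_num)).mono' (hmeas 0)
      (ae_of_all _ fun α => ?_)
    rw [hq0, norm_mul, Real.norm_of_nonneg (Real.exp_pos _).le]
    exact mul_le_of_le_one_left (Real.exp_pos _).le (hh α)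
  · exact ((ContinuousLinearMap.toSpanSingletonCLE (𝕜 := ℝ) (E := ℝ)).continuous.comp
      hF').aestronglyMeasurable
  · refine ae_of_all _ fun α ψ hψ => ?_
    have hq := hquad ψ hψ.2 α
    have hsm : K * |ψ| ≤ 1 / 2 := hψ.1
    set S : ℝ := ∑ i, α i ^ 2 with hS
    have hS0 : 0 ≤ S := Finset.sum_nonneg fun i _ => sq_nonneg _
    have hqS : |α ⬝ᵥ (P ψ *ᵥ α) - S| ≤ 1 / 2 * S :=
      hq.trans (mul_le_mul_of_nonneg_right hsm hS0)
    have hlow := (abs_le.1 hqS).1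
    have he := abs_exp_sub_exp_le (x := -(1 / 2) * (α ⬝ᵥ (P ψ *ᵥ α))) (y := -(1 / 2) * S)
      (B := -(1 / 4) * S) (by linarith) (by linarith)
    rw [← mul_sub, abs_mul] at he
    -- `S ≤ 8 exp (S / 8)` absorbs the quadratic factor into the exponential
    have hexp : S * Real.exp (-(1 / 4) * S) ≤ 8 * Real.exp (-(1 / 8) * S) := by
      have h1 : -(1 / 8) * S = 1 / 8 * S + -(1 / 4) * S := by ring
      rw [h1, Real.exp_add, ← mul_assoc]
      refine mul_le_mul_of_nonneg_right ?_ (Real.exp_pos _).le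
      linarith [Real.add_one_le_exp (1 / 8 * S)]
    rw [hq0, ← mul_sub, norm_mul, sub_zero, Real.norm_eq_abs, Real.norm_eq_abs, Real.norm_eq_abs]
    refine (mul_le_of_le_one_left (abs_nonneg _) (hh α)).trans (he.trans ?_)
    have h12 : |(-(1 / 2) : ℝ)| = 1 / 2 := by norm_num [abs_of_pos]
    rw [h12]
    calc 1 / 2 * |α ⬝ᵥ (P ψ *ᵥ α) - S| * Real.exp (-(1 / 4) * S)
        ≤ 1 / 2 * (K * |ψ| * S) * Real.exp (-(1 / 4) * S) := by gcongr
      _ = 1 / 2 * (K * |ψ|) * (S * Real.exp (-(1 / 4) * S)) := by ring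
      _ ≤ 1 / 2 * (K * |ψ|) * (8 * Real.exp (-(1 / 8) * S)) := by gcongr
      _ = 4 * K * Real.exp (-(1 / 8) * S) * |ψ| := by ring
  · exact (integrable_exp_neg_sum_sq n (by norm_num)).const_mul _
  · refine ae_of_all _ fun α => ?_
    have hq : HasDerivAt (fun ψ => α ⬝ᵥ (P ψ *ᵥ α)) (∑ s, ∑ t, -(D s t) * (α s * α t)) 0 := by
      simp_rw [quad_eq_sum]
      exact HasDerivAt.fun_sum fun s _ => HasDerivAt.fun_sum fun t _ => (hP s t).mul_const _
    have := ((hq.const_mul (-(1 / 2))).exp).const_mul (h α)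
    refine HasDerivAt.hasFDerivAt (this.congr_deriv ?_)
    rw [hq0]
    simp only [neg_mul, Finset.sum_neg_distrib]
    ring

/-! ### Cross moments and the score -/

/-- Under a product weight `∏ G i`, the cross moment of two distinct coordinates factorises; `c i`
is the mean of the `i`-th coordinate under the normalised weight. -/
lemma integral_pair_mul_prod {n : ℕ} (G : Fin n → ℝ → ℝ) (c : Fin n → ℝ)
    (hG : ∀ i, Integrable (G i)) (hG1 : ∀ i, Integrable fun x => x * G i x)
    (hmean : ∀ i, ∫ x, x * G i x = c i * ∫ x, G i x) {s t : Fin n} (hst : s ≠ t) :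
    Integrable (fun α : Fin n → ℝ => (α s * α t) * ∏ i, G i (α i)) ∧
      ∫ α : Fin n → ℝ, (α s * α t) * ∏ i, G i (α i) = c s * c t * ∏ i, ∫ x, G i x := by
  set H : Fin n → ℝ → ℝ := fun i x =>
    (if i = s then x else 1) * (if i = t then x else 1) * G i x with hH
  have hprod : ∀ α : Fin n → ℝ, (α s * α t) * ∏ i, G i (α i) = ∏ i, H i (α i) := by
    intro α
    simp only [hH]
    rw [Finset.prod_mul_distrib, Finset.prod_mul_distrib, Finset.prod_ite_eq', Finset.prod_ite_eq']
    simp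
  have hone : ∀ i, Integrable (H i) ∧ ∫ x, H i x =
      (if i = s then c i else 1) * (if i = t then c i else 1) * ∫ x, G i x := by
    intro i
    by_cases h1 : i = s
    · have h2 : i ≠ t := fun h => hst (h1.symm.trans h)
      simpa only [hH, h1, hst, if_true, if_false, mul_one] using ⟨hG1 s, hmean s⟩
    · by_cases h2 : i = t
      · subst h2
        simpa only [hH, h1, if_true, if_false, one_mul] using ⟨hG1 i, hmean i⟩
      · simpa only [hH, h1, h2, if_false, one_mul, and_true] using hG i
  simp_rw [hprod]
  refine ⟨Integrable.fintype_prod fun i => (hone i).1, ?_⟩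
  rw [integral_fintype_prod_volume_eq_prod]
  simp_rw [(hone _).2]
  rw [Finset.prod_mul_distrib, Finset.prod_mul_distrib, Finset.prod_ite_eq', Finset.prod_ite_eq']
  simp

/-- The symmetric sum over pairs at distance `a` counts each pair `t = s + a` twice. -/
lemma half_sum_dist_eq {n a : ℕ} (ha : 1 ≤ a) (u : Fin n → ℝ) :
    1 / 2 * ∑ s : Fin n, ∑ t : Fin n,
      (if Nat.dist (s : ℕ) (t : ℕ) = a then (1 : ℝ) else 0) * (u s * u t) =
    ∑ t : Fin n, ∑ s : Fin n, (if (t : ℕ) = (s : ℕ) + a then u t * u s else 0) := by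
  have h : ∀ s t : Fin n, (if Nat.dist (s : ℕ) (t : ℕ) = a then (1 : ℝ) else 0) * (u s * u t) =
      (if (s : ℕ) = (t : ℕ) + a then u s * u t else 0) +
      (if (t : ℕ) = (s : ℕ) + a then u t * u s else 0) := by
    intro s t
    unfold Nat.dist
    split_ifs <;> first | omega | ring
  simp_rw [h, Finset.sum_add_distrib]
  rw [Finset.sum_comm (f := fun s t : Fin n => if (t : ℕ) = (s : ℕ) + a then u t * u s else 0)]
  ring

/-- At `ψ = 0` the score of the full parameter-driven likelihood with respect
to a lag-`a` dependence parameter equals `τ` times the lag-`a` sum of cross-products of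
posterior-mean residuals: with `R(0) = Iₙ`, `[R'(0)]_{s,t} = 1_{|s−t| = a}`, and
`L(ψ) = ∫_{ℝⁿ} exp( Σ_t [ y_t (w_t + √τ α_t) − m_t b(w_t + √τ α_t) ] ) g(α, R(ψ)) dα`,
the function `ψ ↦ log L(ψ)` is differentiable at `0` with derivative
`τ Σ_{t > a} u_t u_{t−a}`, where
`u_t = y_t − (∫ m_t ḃ(w_t+√τ α) f(y_t|w_t+√τ α) φ(α) dα)/(∫ f(y_t|w_t+√τ α) φ(α) dα)`.
(The time points are indexed here by `Fin n`; the sum `Σ_{t=a+1}^n u_t u_{t−a}` is written as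
the double sum over pairs `(t, s)` with `t = s + a`.) -/
theorem statement15 (n : ℕ) (a : ℕ) (ha : 1 ≤ a) (han : a < n)
    (m : Fin n → ℕ) (hm : ∀ t, 1 ≤ m t)
    (y : Fin n → ℕ) (hy : ∀ t, y t ≤ m t)
    (w : Fin n → ℝ) (τ : ℝ) (hτ : 0 ≤ τ)
    (ε : ℝ) (hε : 0 < ε)
    (R : ℝ → Matrix (Fin n) (Fin n) ℝ)
    (hRsymm : ∀ ψ ∈ Set.Ioo (-ε) ε, (R ψ).IsSymm)
    (hRpos : ∀ ψ ∈ Set.Ioo (-ε) ε, (R ψ).PosDef)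
    (hR0 : R 0 = 1)
    (hR' : ∀ s t : Fin n, HasDerivAt (fun ψ => R ψ s t)
        (if Nat.dist (s : ℕ) (t : ℕ) = a then (1 : ℝ) else 0) 0)
    (L : ℝ → ℝ)
    (hL : ∀ ψ, L ψ = ∫ α : Fin n → ℝ,
        Real.exp (∑ t, ((y t : ℝ) * (w t + Real.sqrt τ * α t)
          - (m t : ℝ) * bfun (w t + Real.sqrt τ * α t))) * mvnDens (R ψ) α)
    (u : Fin n → ℝ)
    (hu : ∀ t, u t = (y t : ℝ) -
      (∫ α : ℝ, (m t : ℝ) * bdot (w t + Real.sqrt τ * α)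
          * binDens (m t) (y t) (w t + Real.sqrt τ * α) * stdNormalPDF α) /
      (∫ α : ℝ, binDens (m t) (y t) (w t + Real.sqrt τ * α) * stdNormalPDF α)) :
    HasDerivAt (fun ψ => Real.log (L ψ))
      (τ * ∑ t : Fin n, ∑ s : Fin n,
        (if (t : ℕ) = (s : ℕ) + a then u t * u s else 0))
      0 := by
  set σ : ℝ := Real.sqrt τ with hσ
  have hσ2 : σ * σ = τ := Real.mul_self_sqrt hτ
  set D : Matrix (Fin n) (Fin n) ℝ := fun s t =>
    if Nat.dist (s : ℕ) (t : ℕ) = a then (1 : ℝ) else 0 with hD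
  have hDdiag : ∀ s, D s s = 0 := by
    intro s
    simp only [hD, Nat.dist_self]
    rw [if_neg (by omega)]
  set h : (Fin n → ℝ) → ℝ := fun α => Real.exp (∑ t, ((y t : ℝ) * (w t + σ * α t)
          - (m t : ℝ) * bfun (w t + σ * α t))) with hh
  have hcont : Continuous h := by
    have := continuous_bfun
    fun_prop
  have hbound : ∀ α, |h α| ≤ 1 := by
    intro α
    rw [abs_of_pos (Real.exp_pos _)]
    exact Real.exp_le_one_iff.2 (Finset.sum_nonpos fun t _ => loglik_nonpos (hy t) _)
  set G : Fin n → ℝ → ℝ := fun i => gaussKern (m i) (y i) (w i) σ with hG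
  set Z : ℝ := ∏ i, ∫ x, G i x with hZ
  have hZpos : 0 < Z := Finset.prod_pos fun i _ => integral_gaussKern_pos (hy i) _ _
  have hfac : ∀ α : Fin n → ℝ, h α * Real.exp (-(1 / 2) * ∑ i, α i ^ 2) = ∏ i, G i (α i) := by
    intro α
    simp only [hh, hG, gaussKern]
    rw [Finset.prod_mul_distrib, ← Real.exp_sum, ← Real.exp_sum, Finset.mul_sum]
    congr 2
    exact Finset.sum_congr rfl fun i _ => by ring
  have hpair : ∀ {s t : Fin n}, s ≠ t → _ := fun hst =>
    integral_pair_mul_prod G (fun i => σ * u i) (fun i => integrable_gaussKern (hy i) _ _)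
      (fun i => integrable_id_mul_gaussKern (hy i) _ _)
      (fun i => integral_id_mul_gaussKern_eq_residual (hy i) _ _ _ (hu i)) hst
  set S : ℝ := ∑ t : Fin n, ∑ s : Fin n,
    (if (t : ℕ) = (s : ℕ) + a then u t * u s else 0) with hS
  have hterm : ∀ s t : Fin n,
      Integrable (fun α : Fin n → ℝ => D s t * ((α s * α t) * ∏ i, G i (α i))) ∧
      ∫ α : Fin n → ℝ, D s t * ((α s * α t) * ∏ i, G i (α i)) =
        τ * Z * (D s t * (u s * u t)) := by
    intro s t
    by_cases hst : s = t
    · subst hst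
      simp [hDdiag]
    · refine ⟨(hpair hst).1.const_mul _, ?_⟩
      rw [integral_const_mul, (hpair hst).2, ← hσ2]
      ring
  have hderiv_val : ∫ α : Fin n → ℝ, h α * (Real.exp (-(1 / 2) * ∑ i, α i ^ 2) *
        (1 / 2 * ∑ s, ∑ t, D s t * (α s * α t))) = τ * S * Z := by
    have e : ∀ α : Fin n → ℝ, h α * (Real.exp (-(1 / 2) * ∑ i, α i ^ 2) *
        (1 / 2 * ∑ s, ∑ t, D s t * (α s * α t))) =
        1 / 2 * ∑ s, ∑ t, D s t * ((α s * α t) * ∏ i, G i (α i)) := by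
      intro α
      rw [← mul_assoc, hfac, mul_left_comm, Finset.mul_sum]
      congr 1
      refine Finset.sum_congr rfl fun s _ => ?_
      rw [Finset.mul_sum]
      exact Finset.sum_congr rfl fun t _ => by ring
    simp_rw [e]
    rw [integral_const_mul, integral_finsetSum _ fun s _ =>
      integrable_finsetSum _ fun t _ => (hterm s t).1]
    simp_rw [integral_finsetSum _ fun t _ => (hterm _ t).1, (hterm _ _).2, ← Finset.mul_sum]
    rw [hS, ← half_sum_dist_eq ha u]
    ring
  set J : ℝ → ℝ := fun ψ => ∫ α, h α * Real.exp (-(1 / 2) * (α ⬝ᵥ ((R ψ)⁻¹ *ᵥ α))) with hJ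
  have hJd : HasDerivAt J (τ * S * Z) 0 := by
    rw [← hderiv_val]
    exact hasDerivAt_gauss_integral h hcont hbound (fun ψ => (R ψ)⁻¹) D (by simp [hR0])
      (hasDerivAt_inv_entry R D hR0 hR')
  have hJ0 : J 0 = Z := by
    simp only [hJ, hR0, inv_one, Matrix.one_mulVec]
    rw [hZ, ← integral_fintype_prod_volume_eq_prod]
    refine integral_congr_ae (ae_of_all _ fun α => ?_)
    simp only [← hfac, dotProduct, sq]
  have hdet := hasDerivAt_det_zero R D hR0 hR' hDdiag
  have hdet' : HasDerivAt (fun ψ => (R ψ).det ^ (-(1 : ℝ) / 2)) 0 0 := by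
    refine (hdet.rpow_const (p := -(1 : ℝ) / 2) (Or.inl (by simp [hR0]))).congr_deriv ?_
    simp
  set c : ℝ := (2 * Real.pi) ^ (-(n : ℝ) / 2) with hc
  have hcpos : 0 < c := by positivity
  have hLeq : L = fun ψ => c * ((R ψ).det ^ (-(1 : ℝ) / 2) * J ψ) := by
    funext ψ
    rw [hL ψ, hJ, ← mul_assoc, ← integral_const_mul]
    refine integral_congr_ae (ae_of_all _ fun α => ?_)
    simp only [mvnDens, hh, hc]
    ring
  have hL0 : L 0 = c * Z := by simp [hLeq, hJ0, hR0]
  have hLd : HasDerivAt L (c * (τ * S * Z)) 0 := by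
    rw [hLeq]
    refine ((hdet'.mul hJd).const_mul c).congr_deriv ?_
    simp [hR0]
  refine (hLd.log (by rw [hL0]; positivity)).congr_deriv ?_
  rw [hL0]
  field_simp

end
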